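/- Let $f : \mathbb{D} \to \Omega$ be a conformal (holomorphic injective) map from the unit disc onto a domain $\Omega \subseteq \mathbb{C}$ with $f(0) = z$. Then $\tfrac{1}{4}|f'(0)| \le \operatorname{dist}(z, \partial\Omega) \le |f'(0)|$. -/

import Mathlib

open Metric
open Set Filter Topology MeasureTheory Function

theorem nhds_le_map_nhds_of_injOn {f : ℂ → ℂ} {U : Set ℂ} (hU : IsOpen U)
    (hf : DifferentiableOn ℂ f U) (hinj : InjOn f U) {x : ℂ} (hx : x ∈ U) :
    𝓝 (f x) ≤ map f (𝓝 x) := by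
  refine (hf.analyticAt (hU.mem_nhds hx)).eventually_constant_or_nhds_le_map_nhds.resolve_left
    fun h ↦ ?_
  have hne : ∀ᶠ y in 𝓝[≠] x, False := by
    filter_upwards [h.filter_mono nhdsWithin_le_nhds, nhdsWithin_le_nhds (hU.mem_nhds hx),
      self_mem_nhdsWithin] with y hy hyU hyx
    exact hyx (hinj hyU hx hy)
  exact hne.exists.elim fun _ ↦ id

theorem isOpen_image_of_injOn {f : ℂ → ℂ} {U : Set ℂ} (hU : IsOpen U)
    (hf : DifferentiableOn ℂ f U) (hinj : InjOn f U) : IsOpen (f '' U) := by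
  rw [isOpen_iff_mem_nhds]
  rintro _ ⟨x, hx, rfl⟩
  exact nhds_le_map_nhds_of_injOn hU hf hinj hx (image_mem_map (hU.mem_nhds hx))

theorem continuousAt_invFunOn_of_injOn {f : ℂ → ℂ} {U : Set ℂ} (hU : IsOpen U)
    (hf : DifferentiableOn ℂ f U) (hinj : InjOn f U) {x : ℂ} (hx : x ∈ U) :
    ContinuousAt (invFunOn f U) (f x) := by
  have hleft : invFunOn f U (f x) = x := hinj.leftInvOn_invFunOn hx
  rw [ContinuousAt, hleft]
  refine Tendsto.mono_left ?_ (nhds_le_map_nhds_of_injOn hU hf hinj hx)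
  rw [tendsto_map'_iff]
  refine tendsto_id.congr' ?_
  filter_upwards [hU.mem_nhds hx] with y hy
  exact (hinj.leftInvOn_invFunOn hy).symm

theorem hasDerivAt_invFunOn_of_injOn {f : ℂ → ℂ} {U : Set ℂ} (hU : IsOpen U)
    (hf : DifferentiableOn ℂ f U) (hinj : InjOn f U) {x : ℂ} (hx : x ∈ U)
    (h0 : deriv f x ≠ 0) : HasDerivAt (invFunOn f U) (deriv f x)⁻¹ (f x) := by
  have hleft : invFunOn f U (f x) = x := hinj.leftInvOn_invFunOn hx
  refine HasDerivAt.of_local_left_inverse (f := f)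
    (continuousAt_invFunOn_of_injOn hU hf hinj hx) ?_ h0 ?_
  · rw [hleft]
    exact (hf.differentiableAt (hU.mem_nhds hx)).hasDerivAt
  · filter_upwards [(isOpen_image_of_injOn hU hf hinj).mem_nhds (mem_image_of_mem f hx)] with y hy
    exact invFunOn_eq hy

theorem differentiableAt_invFunOn_of_injOn {f : ℂ → ℂ} {U : Set ℂ} (hU : IsOpen U)
    (hf : DifferentiableOn ℂ f U) (hinj : InjOn f U) {x : ℂ} (hx : x ∈ U) :
    DifferentiableAt ℂ (invFunOn f U) (f x) := by
  refine (Complex.analyticAt_of_differentiable_on_punctured_nhds_of_continuousAt ?_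
    (continuousAt_invFunOn_of_injOn hU hf hinj hx)).differentiableAt
  have hderiv : ∀ᶠ y in 𝓝[≠] x, deriv f y ≠ 0 := by
    refine (hf.deriv hU).analyticAt (hU.mem_nhds hx)
      |>.eventually_eq_zero_or_eventually_ne_zero.resolve_left fun h ↦ ?_
    obtain ⟨ε, hε, hball⟩ := Metric.eventually_nhds_iff_ball.1 (h.and (hU.mem_nhds hx))
    obtain ⟨y, hyx, hy⟩ : ∃ y, y ≠ x ∧ y ∈ ball x ε := by
      have : ∀ᶠ y in 𝓝[≠] x, y ≠ x ∧ y ∈ ball x ε :=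
        eventually_mem_nhdsWithin.and (nhdsWithin_le_nhds (ball_mem_nhds x hε))
      exact this.exists
    refine hyx (hinj (hball y hy).2 hx ?_)
    exact isOpen_ball.is_const_of_deriv_eq_zero (convex_ball x ε).isPreconnected
      (hf.mono fun z hz ↦ (hball z hz).2) (fun z hz ↦ (hball z hz).1) hy (mem_ball_self hε)
  rw [eventually_nhdsWithin_iff] at hderiv ⊢
  have hmem := nhds_le_map_nhds_of_injOn hU hf hinj hx
    (image_mem_map (hderiv.and (hU.mem_nhds hx)))
  filter_upwards [hmem]
  rintro _ ⟨y, ⟨hy, hyU⟩, rfl⟩ hne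
  exact (hasDerivAt_invFunOn_of_injOn hU hf hinj hyU
    (hy fun h ↦ hne (congrArg f h))).differentiableAt

theorem mul_deriv_invFunOn_of_injOn {f : ℂ → ℂ} {U : Set ℂ} (hU : IsOpen U)
    (hf : DifferentiableOn ℂ f U) (hinj : InjOn f U) {x : ℂ} (hx : x ∈ U) :
    deriv (invFunOn f U) (f x) * deriv f x = 1 := by
  have hcomp := (differentiableAt_invFunOn_of_injOn hU hf hinj hx).hasDerivAt.comp x
    (hf.differentiableAt (hU.mem_nhds hx)).hasDerivAt
  refine hcomp.unique ((hasDerivAt_id x).congr_of_eventuallyEq ?_)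
  filter_upwards [hU.mem_nhds hx] with y hy
  exact hinj.leftInvOn_invFunOn hy

/-- Schwarz lemma for the inverse of a univalent function. -/
theorem le_norm_deriv_of_ball_subset_image {f : ℂ → ℂ} {d : ℝ} (hd : 0 < d)
    (hf : DifferentiableOn ℂ f (ball 0 1)) (hinj : InjOn f (ball 0 1))
    (hsub : ball (f 0) d ⊆ f '' ball 0 1) : d ≤ ‖deriv f 0‖ := by
  have h0 : (0 : ℂ) ∈ ball (0 : ℂ) 1 := mem_ball_self one_pos
  have hleft : invFunOn f (ball 0 1) (f 0) = 0 := hinj.leftInvOn_invFunOn h0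
  have hdiff : DifferentiableOn ℂ (invFunOn f (ball 0 1)) (ball (f 0) d) := by
    intro y hy
    obtain ⟨x, hx, rfl⟩ := hsub hy
    exact (differentiableAt_invFunOn_of_injOn isOpen_ball hf hinj hx).differentiableWithinAt
  have hmaps : MapsTo (invFunOn f (ball 0 1)) (ball (f 0) d)
      (ball (invFunOn f (ball 0 1) (f 0)) 1) := by
    rw [hleft]
    exact fun y hy ↦ invFunOn_mem (hsub hy)
  have hle := Complex.norm_deriv_le_div_of_mapsTo_ball hdiff
    (hmaps.mono_right ball_subset_closedBall) hd
  have hmul := congrArg norm (mul_deriv_invFunOn_of_injOn isOpen_ball hf hinj h0)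
  rw [norm_mul, norm_one] at hmul
  rw [le_div_iff₀ hd] at hle
  nlinarith [norm_nonneg (deriv f 0), norm_nonneg (deriv (invFunOn f (ball 0 1)) (f 0))]

theorem abs_det_smul_one (c : ℂ) : |(c • (1 : ℂ →L[ℝ] ℂ)).det| = ‖c‖ ^ 2 := by
  have : (c • (1 : ℂ →L[ℝ] ℂ)).det = ‖c‖ ^ 2 := by
    rw [ContinuousLinearMap.det, ← LinearMap.det_toMatrix Complex.basisOneI, Matrix.det_fin_two,
      Complex.sq_norm, Complex.normSq_apply]
    simp [LinearMap.toMatrix_apply]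
  rw [this, abs_of_nonneg (sq_nonneg _)]

/-- Change of variables for the logarithmic area `|dw|² / |w|²`. -/
theorem lintegral_image_inv_norm_sq {g : ℂ → ℂ} {s : Set ℂ} (hs : IsOpen s)
    (hg : DifferentiableOn ℂ g s) (hinj : InjOn g s) :
    ∫⁻ w in g '' s, ENNReal.ofReal ((‖w‖ ^ 2)⁻¹) =
      ∫⁻ z in s, ENNReal.ofReal (‖deriv g z / g z‖ ^ 2) := by
  rw [lintegral_image_eq_lintegral_abs_det_fderiv_mul volume hs.measurableSet
    (fun x hx ↦ ((hg.differentiableAt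
      (hs.mem_nhds hx)).hasDerivAt.complexToReal_fderiv).hasFDerivWithinAt) hinj]
  simp_rw [abs_det_smul_one, ← ENNReal.ofReal_mul (sq_nonneg _), norm_div, div_pow,
    div_eq_mul_inv]

/-- The open annulus of inner radius `a` and outer radius `b` centred at the origin. -/
def openAnnulus (a b : ℝ) : Set ℂ := {z | a < ‖z‖ ∧ ‖z‖ < b}

theorem isOpen_openAnnulus (a b : ℝ) : IsOpen (openAnnulus a b) :=
  (isOpen_lt continuous_const continuous_norm).inter (isOpen_lt continuous_norm continuous_const)

/-- Integration over an annulus in polar coordinates. -/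
theorem lintegral_openAnnulus {F : ℂ → ENNReal} {a b : ℝ} (ha : 0 ≤ a)
    (hF : Measurable F) :
    ∫⁻ z in openAnnulus a b, F z =
      ∫⁻ ρ in Ioo a b, ∫⁻ θ in Ioo (-Real.pi) Real.pi,
        ENNReal.ofReal ρ * F (circleMap 0 ρ θ) := by
  have hA := (isOpen_openAnnulus a b).measurableSet
  have hcoe : ∀ p : ℝ × ℝ, Complex.polarCoord.symm p = circleMap 0 p.1 p.2 := by
    intro p
    simp [circleMap, Complex.exp_mul_I]
  have hmeas : Measurable fun p : ℝ × ℝ ↦ ENNReal.ofReal p.1 *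
      (openAnnulus a b).indicator F (circleMap 0 p.1 p.2) := by
    refine (ENNReal.measurable_ofReal.comp measurable_fst).mul ((hF.indicator hA).comp ?_)
    have hcont : Continuous fun p : ℝ × ℝ ↦ circleMap 0 p.1 p.2 := by
      unfold circleMap
      fun_prop
    exact hcont.measurable
  rw [← lintegral_indicator hA, ← Complex.lintegral_comp_polarCoord_symm]
  simp_rw [hcoe, smul_eq_mul]
  rw [show polarCoord.target = Ioi (0 : ℝ) ×ˢ Ioo (-Real.pi) Real.pi from rfl,
    Measure.volume_eq_prod, ← Measure.prod_restrict, lintegral_prod _ hmeas.aemeasurable,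
    ← lintegral_indicator measurableSet_Ioi, ← lintegral_indicator measurableSet_Ioo]
  refine lintegral_congr fun ρ ↦ ?_
  by_cases hρ : ρ ∈ Ioo a b
  · have hρ0 : 0 < ρ := ha.trans_lt hρ.1
    rw [indicator_of_mem hρ, indicator_of_mem (mem_Ioi.2 hρ0)]
    refine lintegral_congr fun θ ↦ ?_
    rw [indicator_of_mem]
    simpa [openAnnulus, abs_of_pos hρ0] using hρ
  · rw [indicator_of_notMem hρ]
    by_cases hρ0 : ρ ∈ Ioi (0 : ℝ)
    · rw [indicator_of_mem hρ0]
      refine lintegral_eq_zero_of_ae_eq_zero (.of_forall fun θ ↦ ?_)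
      have : circleMap 0 ρ θ ∉ openAnnulus a b := by
        simpa [openAnnulus, abs_of_pos (mem_Ioi.1 hρ0)] using hρ
      simp [this]
    · rw [indicator_of_notMem hρ0]

theorem lintegral_Ioo_two_pi_div {a b : ℝ} (ha : 0 < a) (hab : a ≤ b) :
    ∫⁻ ρ in Ioo a b, ENNReal.ofReal (2 * Real.pi / ρ) =
      ENNReal.ofReal (2 * Real.pi * Real.log (b / a)) := by
  have hii : IntervalIntegrable (fun ρ : ℝ ↦ 2 * Real.pi / ρ) volume a b := by
    refine ContinuousOn.intervalIntegrable (continuousOn_const.div continuousOn_id fun x hx ↦ ?_)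
    rw [uIcc_of_le hab] at hx
    exact (ha.trans_le hx.1).ne'
  rw [restrict_Ioo_eq_restrict_Ioc, ← ofReal_integral_eq_lintegral_ofReal hii.1,
    ← intervalIntegral.integral_of_le hab]
  · simp_rw [div_eq_mul_inv (2 * Real.pi)]
    rw [intervalIntegral.integral_const_mul, integral_inv_of_pos ha (ha.trans_le hab)]
  · filter_upwards [ae_restrict_mem measurableSet_Ioc] with ρ hρ
    have := ha.trans hρ.1
    positivity

theorem lintegral_openAnnulus_inv_norm_sq {a b : ℝ} (ha : 0 < a) (hab : a ≤ b) :
    ∫⁻ w in openAnnulus a b, ENNReal.ofReal ((‖w‖ ^ 2)⁻¹) =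
      ENNReal.ofReal (2 * Real.pi * Real.log (b / a)) := by
  rw [lintegral_openAnnulus ha.le (by fun_prop), ← lintegral_Ioo_two_pi_div ha hab]
  refine setLIntegral_congr_fun measurableSet_Ioo fun ρ hρ ↦ ?_
  have hρ0 : 0 < ρ := ha.trans hρ.1
  simp only [norm_circleMap_zero, sq_abs, lintegral_const, Measure.restrict_apply_univ,
    Real.volume_Ioo, ← ENNReal.ofReal_mul hρ0.le]
  rw [← ENNReal.ofReal_mul (by positivity)]
  congr 1
  field_simp
  ring

theorem two_pi_le_integral_norm_sq {P : ℝ → ℂ} (hP : Continuous P)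
    (havg : ∫ θ in -Real.pi..Real.pi, P θ = 2 * Real.pi) :
    2 * Real.pi ≤ ∫ θ in -Real.pi..Real.pi, ‖P θ‖ ^ 2 := by
  have hre : ∫ θ in -Real.pi..Real.pi, (P θ).re = 2 * Real.pi := by
    have h := Complex.reCLM.intervalIntegral_comp_comm (μ := volume)
      (hP.intervalIntegrable (-Real.pi) Real.pi)
    simp only [Complex.reCLM_apply] at h
    rw [h, havg]
    simp
  have hle : ∫ θ in -Real.pi..Real.pi, (2 * (P θ).re - 1) ≤
      ∫ θ in -Real.pi..Real.pi, ‖P θ‖ ^ 2 := by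
    refine intervalIntegral.integral_mono (by linarith [Real.pi_pos])
      (Continuous.intervalIntegrable (by fun_prop) _ _)
      (Continuous.intervalIntegrable (by fun_prop) _ _) fun θ ↦ ?_
    simp only [Complex.sq_norm, Complex.normSq_apply]
    nlinarith [sq_nonneg ((P θ).re - 1), sq_nonneg (P θ).im]
  rw [intervalIntegral.integral_sub (Continuous.intervalIntegrable (by fun_prop) _ _)
    (Continuous.intervalIntegrable (by fun_prop) _ _), intervalIntegral.integral_const_mul,
    hre, intervalIntegral.integral_const, smul_eq_mul] at hle
  linarith

/-- The mean value property bounds the circle means of `‖p‖²` from below. -/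
theorem two_pi_div_le_lintegral_circleMap {p : ℂ → ℂ} {ρ : ℝ} (hρ0 : 0 < ρ) (hρ : ρ < 1)
    (hp : DifferentiableOn ℂ p (ball 0 1)) (hp0 : p 0 = 1) :
    ENNReal.ofReal (2 * Real.pi / ρ) ≤ ∫⁻ θ in Ioo (-Real.pi) Real.pi,
      ENNReal.ofReal ρ * ENNReal.ofReal (‖p (circleMap 0 ρ θ) / circleMap 0 ρ θ‖ ^ 2) := by
  have hmaps : ∀ θ, circleMap 0 ρ θ ∈ ball (0 : ℂ) 1 := fun θ ↦ by
    simpa [abs_of_pos hρ0] using hρ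
  have hcont : Continuous fun θ ↦ p (circleMap 0 ρ θ) :=
    hp.continuousOn.comp_continuous (continuous_circleMap 0 ρ) hmaps
  have havg : ∫ θ in -Real.pi..Real.pi, p (circleMap 0 ρ θ) = 2 * Real.pi := by
    have hd : DiffContOnCl ℂ p (ball 0 |ρ|) := by
      rw [abs_of_pos hρ0]
      exact (hp.mono (closedBall_subset_ball hρ)).diffContOnCl_ball subset_rfl
    have h := hd.circleAverage
    rw [Real.circleAverage_def, hp0, Complex.real_smul, Complex.ofReal_inv] at h
    have hper : (fun θ ↦ p (circleMap 0 ρ θ)).Periodic (2 * Real.pi) := fun x ↦ by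
      simp [periodic_circleMap 0 ρ x]
    have h2 := hper.intervalIntegral_add_eq 0 (-Real.pi)
    rw [zero_add, show -Real.pi + 2 * Real.pi = Real.pi by ring] at h2
    rw [h2] at h
    have : ((2 * Real.pi : ℝ) : ℂ) ≠ 0 := by exact_mod_cast Real.two_pi_pos.ne'
    rw [inv_mul_eq_iff_eq_mul₀ this] at h
    simpa using h
  have hsq := two_pi_le_integral_norm_sq hcont havg
  have hint : ∀ θ, ENNReal.ofReal ρ *
      ENNReal.ofReal (‖p (circleMap 0 ρ θ) / circleMap 0 ρ θ‖ ^ 2) =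
      ENNReal.ofReal (ρ⁻¹ * ‖p (circleMap 0 ρ θ)‖ ^ 2) := by
    intro θ
    rw [← ENNReal.ofReal_mul hρ0.le, norm_div, norm_circleMap_zero, abs_of_pos hρ0]
    congr 1
    field_simp
  simp_rw [hint]
  have hii : IntervalIntegrable (fun θ ↦ ρ⁻¹ * ‖p (circleMap 0 ρ θ)‖ ^ 2) volume
      (-Real.pi) Real.pi := ((hcont.norm.pow 2).const_mul _).intervalIntegrable _ _
  rw [restrict_Ioo_eq_restrict_Ioc, ← ofReal_integral_eq_lintegral_ofReal hii.1
    (.of_forall fun θ ↦ by positivity),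
    ← intervalIntegral.integral_of_le (by linarith [Real.pi_pos]),
    intervalIntegral.integral_const_mul]
  refine ENNReal.ofReal_le_ofReal ?_
  rw [div_eq_inv_mul]
  gcongr

theorem two_pi_mul_log_le_lintegral {p : ℂ → ℂ} {r : ℝ} (hr : 0 < r) (hr1 : r < 1)
    (hp : DifferentiableOn ℂ p (ball 0 1)) (hp0 : p 0 = 1) :
    ENNReal.ofReal (2 * Real.pi * Real.log (1 / r)) ≤
      ∫⁻ z in openAnnulus r 1, ENNReal.ofReal (‖p z / z‖ ^ 2) := by
  classical
  have hmeas : Measurable ((ball (0 : ℂ) 1).piecewise p 0) :=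
    hp.continuousOn.measurable_piecewise continuousOn_const measurableSet_ball
  have hcongr : ∀ z ∈ ball (0 : ℂ) 1, (ball (0 : ℂ) 1).piecewise p 0 z = p z :=
    fun z hz ↦ piecewise_eq_of_mem _ _ _ hz
  rw [← lintegral_Ioo_two_pi_div hr hr1.le]
  calc _ ≤ ∫⁻ ρ in Ioo r 1, ∫⁻ θ in Ioo (-Real.pi) Real.pi, ENNReal.ofReal ρ *
        ENNReal.ofReal (‖(ball (0 : ℂ) 1).piecewise p 0 (circleMap 0 ρ θ) /
          circleMap 0 ρ θ‖ ^ 2) := by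
        refine setLIntegral_mono' measurableSet_Ioo fun ρ hρ ↦ ?_
        have hρ0 : 0 < ρ := hr.trans hρ.1
        refine (two_pi_div_le_lintegral_circleMap hρ0 hρ.2 hp hp0).trans_eq
          (lintegral_congr fun θ ↦ ?_)
        rw [hcongr]
        simpa [abs_of_pos hρ0] using hρ.2
    _ = ∫⁻ z in openAnnulus r 1, ENNReal.ofReal (‖(ball (0 : ℂ) 1).piecewise p 0 z / z‖ ^ 2) :=
        (lintegral_openAnnulus (F := fun z ↦
          ENNReal.ofReal (‖(ball (0 : ℂ) 1).piecewise p 0 z / z‖ ^ 2)) hr.le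
          (by fun_prop)).symm
    _ = _ := by
        refine setLIntegral_congr_fun (isOpen_openAnnulus r 1).measurableSet fun z hz ↦ ?_
        rw [hcongr z (by simpa using hz.2)]

/-- Lower bound for the logarithmic area of the image of the annulus `r < ‖z‖ < 1`. -/
theorem two_pi_mul_log_le_lintegral_deriv_div {T : ℂ → ℂ} {r : ℝ} (hr : 0 < r) (hr1 : r < 1)
    (hT : DifferentiableOn ℂ T (ball 0 1)) (hT0 : T 0 = 0) (hd : deriv T 0 ≠ 0)
    (hne : ∀ z ∈ ball (0 : ℂ) 1, z ≠ 0 → T z ≠ 0) :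
    ENNReal.ofReal (2 * Real.pi * Real.log (1 / r)) ≤
      ∫⁻ z in openAnnulus r 1, ENNReal.ofReal (‖deriv T z / T z‖ ^ 2) := by
  have hS : DifferentiableOn ℂ (dslope T 0) (ball 0 1) :=
    (Complex.differentiableOn_dslope (ball_mem_nhds _ one_pos)).2 hT
  have hTS : ∀ z, T z = z * dslope T 0 z := fun z ↦ by
    simpa [hT0] using (sub_smul_dslope T 0 z).symm
  have hSne : ∀ z ∈ ball (0 : ℂ) 1, dslope T 0 z ≠ 0 := by
    intro z hz h
    rcases eq_or_ne z 0 with rfl | hz0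
    · exact hd (by simpa using h)
    · exact hne z hz hz0 (by rw [hTS, h, mul_zero])
  refine (two_pi_mul_log_le_lintegral
    (p := fun z ↦ 1 + z * (deriv (dslope T 0) z / dslope T 0 z)) hr hr1 ?_ (by simp)).trans_eq ?_
  · exact (differentiableOn_id.mul ((hS.deriv isOpen_ball).div hS hSne)).const_add 1
  · refine setLIntegral_congr_fun (isOpen_openAnnulus r 1).measurableSet fun z hz ↦ ?_
    have hz1 : z ∈ ball (0 : ℂ) 1 := by simpa using hz.2
    have hz0 : z ≠ 0 := norm_pos_iff.1 (hr.trans hz.1)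
    have hderiv : deriv T z = dslope T 0 z + z * deriv (dslope T 0) z := by
      have h := (hasDerivAt_id z).mul (hS.differentiableAt (isOpen_ball.mem_nhds hz1)).hasDerivAt
      simpa using (h.congr_of_eventuallyEq (.of_forall hTS)).deriv
    have := hSne z hz1
    rw [hderiv, hTS z]
    congr 3
    field_simp

theorem exists_closedBall_subset_image {T : ℂ → ℂ} (hT : DifferentiableOn ℂ T (ball 0 1))
    (hinj : InjOn T (ball 0 1)) (hT0 : T 0 = 0) {k : ℝ} (hk0 : 0 < k) (hk : k < ‖deriv T 0‖) :
    ∃ r, 0 < r ∧ r < 1 ∧ k * r < 1 ∧ closedBall 0 (k * r) ⊆ T '' ball 0 r := by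
  have h0 : (0 : ℂ) ∈ ball (0 : ℂ) 1 := mem_ball_self one_pos
  have hd : deriv T 0 ≠ 0 := norm_pos_iff.1 (hk0.trans hk)
  have hg := hasDerivAt_invFunOn_of_injOn isOpen_ball hT hinj h0 hd
  have hleft : invFunOn T (ball 0 1) (T 0) = 0 := hinj.leftInvOn_invFunOn h0
  have hlt : ‖(deriv T 0)⁻¹‖ < k⁻¹ := by
    rw [norm_inv]
    exact inv_strictAnti₀ hk0 hk
  have hev := (hasDerivAt_iff_tendsto_slope.1 hg).norm.eventually_lt_const hlt
  rw [eventually_nhdsWithin_iff, hT0] at hev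
  rw [hT0] at hleft
  have himg := (isOpen_image_of_injOn isOpen_ball hT hinj).mem_nhds (mem_image_of_mem T h0)
  rw [hT0] at himg
  obtain ⟨δ, hδ, hball⟩ := Metric.eventually_nhds_iff_ball.1 (hev.and himg)
  refine ⟨min 1 (min (δ / k) (1 / k)) / 2, by positivity, ?_, ?_, fun w hw ↦ ?_⟩
  · linarith [min_le_left 1 (min (δ / k) (1 / k))]
  · have : min 1 (min (δ / k) (1 / k)) ≤ 1 / k := (min_le_right _ _).trans (min_le_right _ _)
    rw [le_div_iff₀ hk0] at this
    linarith
  · have hle : min 1 (min (δ / k) (1 / k)) ≤ δ / k := (min_le_right _ _).trans (min_le_left _ _)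
    have hpos : 0 < min 1 (min (δ / k) (1 / k)) := by positivity
    generalize min 1 (min (δ / k) (1 / k)) = m at *
    rw [le_div_iff₀ hk0] at hle
    rw [mem_closedBall_zero_iff] at hw
    obtain ⟨hslope, hwT⟩ := hball w (mem_ball_zero_iff.2 (by linarith))
    refine ⟨invFunOn T (ball 0 1) w, ?_, invFunOn_eq hwT⟩
    rw [mem_ball_zero_iff]
    rcases eq_or_ne w 0 with rfl | hw0
    · rw [hleft, norm_zero]
      positivity
    · specialize hslope hw0
      rw [slope_def_field, hleft, sub_zero, sub_zero, norm_div,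
        div_lt_iff₀ (norm_pos_iff.2 hw0), ← div_eq_inv_mul, lt_div_iff₀ hk0] at hslope
      nlinarith

/-- A univalent function on the unit disc fixing `0` and never taking two values with product `1`
has derivative at most `1` at the origin. -/
theorem norm_deriv_le_one_of_mul_ne_one {T : ℂ → ℂ} (hT : DifferentiableOn ℂ T (ball 0 1))
    (hinj : InjOn T (ball 0 1)) (hT0 : T 0 = 0)
    (hmul : ∀ x ∈ ball (0 : ℂ) 1, ∀ y ∈ ball (0 : ℂ) 1, T x * T y ≠ 1) :
    ‖deriv T 0‖ ≤ 1 := by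
  have h0 : (0 : ℂ) ∈ ball (0 : ℂ) 1 := mem_ball_self one_pos
  refine le_of_forall_lt_imp_le_of_dense fun k hk ↦ ?_
  rcases le_or_gt k 0 with hk0 | hk0
  · linarith
  obtain ⟨r, hr, hr1, hkr, hsub⟩ := exists_closedBall_subset_image hT hinj hT0 hk0 hk
  have hd : deriv T 0 ≠ 0 := norm_pos_iff.1 (hk0.trans hk)
  have hne : ∀ z ∈ ball (0 : ℂ) 1, z ≠ 0 → T z ≠ 0 :=
    fun z hz hz0 h ↦ hz0 (hinj hz h0 (h.trans hT0.symm))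
  have hkr0 : 0 < k * r := mul_pos hk0 hr
  set A := openAnnulus r 1 with hA
  have hAo : IsOpen A := isOpen_openAnnulus r 1
  have hAball : A ⊆ ball 0 1 := fun z hz ↦ by simpa using hz.2
  have hAne : ∀ z ∈ A, T z ≠ 0 :=
    fun z hz ↦ hne z (hAball hz) (norm_pos_iff.1 (hr.trans hz.1))
  have hTA := hT.mono hAball
  have hTinv : DifferentiableOn ℂ T⁻¹ A := hTA.inv hAne
  have hinjA := hinj.mono hAball
  have hinjInv : InjOn T⁻¹ A := fun x hx y hy hxy ↦ hinjA hx hy (inv_injective hxy)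
  have hlower : ∀ z ∈ A, k * r < ‖T z‖ := by
    intro z hz
    by_contra! h
    obtain ⟨y, hy, hyz⟩ := hsub (mem_closedBall_zero_iff.2 h)
    obtain rfl := hinj (ball_subset_ball hr1.le hy) (hAball hz) hyz
    exact (mem_ball_zero_iff.1 hy).not_gt hz.1
  have hupper : ∀ z ∈ A, ‖T z‖ < (k * r)⁻¹ := by
    intro z hz
    by_contra! h
    have hmem : (T z)⁻¹ ∈ closedBall (0 : ℂ) (k * r) := by
      rw [mem_closedBall_zero_iff, norm_inv]
      exact inv_le_of_inv_le₀ hkr0 h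
    obtain ⟨y, hy, hyz⟩ := hsub hmem
    exact hmul z (hAball hz) y (ball_subset_ball hr1.le hy)
      (by rw [hyz, mul_inv_cancel₀ (hAne z hz)])
  have hdisj : Disjoint (T '' A) (T⁻¹ '' A) := by
    rw [Set.disjoint_left]
    rintro _ ⟨x, hx, rfl⟩ ⟨y, hy, hxy⟩
    refine hmul x (hAball hx) y (hAball hy) ?_
    rw [← hxy, Pi.inv_apply, inv_mul_cancel₀ (hAne y hy)]
  have hunion : T '' A ∪ T⁻¹ '' A ⊆ openAnnulus (k * r) (k * r)⁻¹ := by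
    rintro _ (⟨x, hx, rfl⟩ | ⟨x, hx, rfl⟩)
    · exact ⟨hlower x hx, hupper x hx⟩
    · have hpos : 0 < ‖T x‖ := norm_pos_iff.2 (hAne x hx)
      refine ⟨?_, ?_⟩ <;> rw [Pi.inv_apply, norm_inv]
      · exact (lt_inv_comm₀ hkr0 hpos).2 (hupper x hx)
      · exact inv_strictAnti₀ hkr0 (hlower x hx)
  have harea := two_pi_mul_log_le_lintegral_deriv_div hr hr1 hT hT0 hd hne
  have harea_inv : ∫⁻ z in A, ENNReal.ofReal (‖deriv T⁻¹ z / T⁻¹ z‖ ^ 2) =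
      ∫⁻ z in A, ENNReal.ofReal (‖deriv T z / T z‖ ^ 2) := by
    refine setLIntegral_congr_fun hAo.measurableSet fun z hz ↦ ?_
    have hz0 := hAne z hz
    have hderiv := ((hTA.differentiableAt (hAo.mem_nhds hz)).hasDerivAt.inv hz0).deriv
    have heq : deriv T⁻¹ z / T⁻¹ z = -(deriv T z / T z) := by
      rw [hderiv, Pi.inv_apply]
      field_simp
    rw [heq, norm_neg]
  have htotal : ENNReal.ofReal (2 * Real.pi * Real.log (1 / r)) +
      ENNReal.ofReal (2 * Real.pi * Real.log (1 / r)) ≤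
      ENNReal.ofReal (2 * Real.pi * Real.log ((k * r)⁻¹ / (k * r))) := by
    rw [← lintegral_openAnnulus_inv_norm_sq hkr0
      (hkr.le.trans ((one_le_inv₀ hkr0).2 hkr.le))]
    refine le_trans ?_ (lintegral_mono_set hunion)
    rw [lintegral_union (isOpen_image_of_injOn hAo hTinv hinjInv).measurableSet hdisj,
      lintegral_image_inv_norm_sq hAo hTA hinjA, lintegral_image_inv_norm_sq hAo hTinv hinjInv,
      harea_inv]
    exact add_le_add harea harea
  have hlogr : 0 ≤ Real.log (1 / r) := Real.log_nonneg (by rw [le_div_iff₀ hr]; linarith)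
  have hlogkr : 0 ≤ Real.log (1 / (k * r)) :=
    Real.log_nonneg (by rw [le_div_iff₀ hkr0]; linarith)
  have hlog : Real.log ((k * r)⁻¹ / (k * r)) = 2 * Real.log (1 / (k * r)) := by
    rw [Real.log_div (by positivity) hkr0.ne', Real.log_inv, one_div, Real.log_inv]
    ring
  rw [← ENNReal.ofReal_add (by positivity) (by positivity), hlog,
    ENNReal.ofReal_le_ofReal_iff (by positivity)] at htotal
  have hle : Real.log (1 / r) ≤ Real.log (1 / (k * r)) := by nlinarith [Real.pi_pos]
  rw [Real.log_le_log_iff (by positivity) (by positivity),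
    one_div_le_one_div hr hkr0] at hle
  exact le_of_mul_le_mul_right (by linarith) hr

theorem exists_exp_eq_of_ne_zero {G : ℂ → ℂ} (hG : DifferentiableOn ℂ G (ball 0 1))
    (hne : ∀ x ∈ ball (0 : ℂ) 1, G x ≠ 0) (hG0 : G 0 = 1) :
    ∃ L : ℂ → ℂ, L 0 = 0 ∧ (∀ x ∈ ball (0 : ℂ) 1, HasDerivAt L (deriv G x / G x) x) ∧
      ∀ x ∈ ball (0 : ℂ) 1, Complex.exp (L x) = G x := by
  have h0 : (0 : ℂ) ∈ ball (0 : ℂ) 1 := mem_ball_self one_pos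
  obtain ⟨L, hL0, hL⟩ := ((hG.deriv isOpen_ball).div hG hne).isExactOn_ball.with_val_at 0 0
  refine ⟨L, hL0, hL, fun x hx ↦ ?_⟩
  have hderiv : ∀ y ∈ ball (0 : ℂ) 1,
      HasDerivAt (fun y ↦ G y * Complex.exp (-L y)) 0 y := by
    intro y hy
    have h := (hG.differentiableAt (isOpen_ball.mem_nhds hy)).hasDerivAt.mul (hL y hy).neg.cexp
    convert! h using 1
    have := hne y hy
    simp only [Pi.div_apply]
    field_simp
    ring
  have hconst := isOpen_ball.is_const_of_deriv_eq_zero (convex_ball (0 : ℂ) 1).isPreconnected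
    (fun y hy ↦ (hderiv y hy).differentiableAt.differentiableWithinAt)
    (fun y hy ↦ (hderiv y hy).deriv) hx h0
  simp only [hL0, hG0, neg_zero, Complex.exp_zero, mul_one, Complex.exp_neg] at hconst
  exact (eq_of_mul_inv_eq_one hconst).symm

theorem norm_deriv_le_four_of_ne_zero {G : ℂ → ℂ} (hG : DifferentiableOn ℂ G (ball 0 1))
    (hinj : InjOn G (ball 0 1)) (hne : ∀ x ∈ ball (0 : ℂ) 1, G x ≠ 0) (hG0 : G 0 = 1) :
    ‖deriv G 0‖ ≤ 4 := by
  have h0 : (0 : ℂ) ∈ ball (0 : ℂ) 1 := mem_ball_self one_pos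
  obtain ⟨L, hL0, hL, hexp⟩ := exists_exp_eq_of_ne_zero hG hne hG0
  set h : ℂ → ℂ := fun x ↦ Complex.exp (L x / 2) with hh
  have hsq : ∀ x ∈ ball (0 : ℂ) 1, h x ^ 2 = G x := by
    intro x hx
    rw [← hexp x hx, hh, ← Complex.exp_nat_mul]
    congr 1
    push_cast
    ring
  have hh0 : h 0 = 1 := by simp [hh, hL0]
  have hh_ne : ∀ x, h x ≠ 0 := fun x ↦ Complex.exp_ne_zero _
  have hh_deriv : ∀ x ∈ ball (0 : ℂ) 1, HasDerivAt h (h x * (deriv G x / G x / 2)) x :=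
    fun x hx ↦ ((hL x hx).div_const 2).cexp
  have hadd : ∀ x ∈ ball (0 : ℂ) 1, ∀ y ∈ ball (0 : ℂ) 1, h x + h y ≠ 0 := by
    intro x hx y hy hxy
    have hxy' : h x = -h y := eq_neg_of_add_eq_zero_left hxy
    obtain rfl : x = y := hinj hx hy (by rw [← hsq x hx, ← hsq y hy, hxy', neg_sq])
    exact hh_ne x (by linear_combination hxy / 2)
  have hadd1 : ∀ x ∈ ball (0 : ℂ) 1, h x + 1 ≠ 0 := fun x hx ↦ hh0 ▸ hadd x hx 0 h0
  have hT_deriv := ((hh_deriv 0 h0).sub_const 1).fun_div ((hh_deriv 0 h0).add_const 1) (hadd1 0 h0)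
  have key := norm_deriv_le_one_of_mul_ne_one (T := fun x ↦ (h x - 1) / (h x + 1)) ?_ ?_ ?_ ?_
  · rw [hT_deriv.deriv, hh0, hG0] at key
    have : (1 * (deriv G 0 / 1 / 2) * (1 + 1) - (1 - 1) * (1 * (deriv G 0 / 1 / 2))) / (1 + 1) ^ 2
        = deriv G 0 / 4 := by ring
    rw [this, norm_div, Complex.norm_ofNat] at key
    linarith
  · intro x hx
    exact (((hh_deriv x hx).sub_const 1).fun_div ((hh_deriv x hx).add_const 1)
      (hadd1 x hx)).differentiableAt.differentiableWithinAt
  · intro x hx y hy hxy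
    have hx1 := hadd1 x hx
    have hy1 := hadd1 y hy
    simp only [div_eq_div_iff hx1 hy1] at hxy
    have hxy' : h x = h y := by linear_combination hxy / 2
    exact hinj hx hy (by rw [← hsq x hx, ← hsq y hy, hxy'])
  · simp [hh0]
  · intro x hx y hy hxy
    have hx1 := hadd1 x hx
    have hy1 := hadd1 y hy
    rw [div_mul_div_comm, div_eq_one_iff_eq (mul_ne_zero hx1 hy1)] at hxy
    exact hadd x hx y hy (by linear_combination -hxy / 2)

/-- The Koebe quarter theorem: distances to omitted values. -/
theorem norm_deriv_le_four_mul_dist {f : ℂ → ℂ} (hf : DifferentiableOn ℂ f (ball 0 1))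
    (hinj : InjOn f (ball 0 1)) {w : ℂ} (hw : w ∉ f '' ball 0 1) :
    ‖deriv f 0‖ ≤ 4 * dist (f 0) w := by
  have h0 : (0 : ℂ) ∈ ball (0 : ℂ) 1 := mem_ball_self one_pos
  have hne : ∀ x ∈ ball (0 : ℂ) 1, f x - w ≠ 0 :=
    fun x hx h ↦ hw ⟨x, hx, sub_eq_zero.1 h⟩
  have key := norm_deriv_le_four_of_ne_zero (G := fun x ↦ (f x - w) / (f 0 - w))
    ((hf.sub_const w).div_const _)
    (fun x hx y hy hxy ↦ hinj hx hy (by simpa [div_left_inj' (hne 0 h0)] using hxy))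
    (fun x hx ↦ div_ne_zero (hne x hx) (hne 0 h0)) (div_self (hne 0 h0))
  rw [deriv_div_const, deriv_sub_const, norm_div,
    div_le_iff₀ (norm_pos_iff.2 (hne 0 h0)), ← dist_eq_norm] at key
  exact key

/-- Koebe quarter theorem and the Schwarz-lemma upper bound: for a conformal map `f` of the
unit disc onto `Ω` with `f 0 = z`, the distance from `z` to `∂Ω` is between `|f'(0)|/4` and
`|f'(0)|`. -/
theorem stmt_12 (f : ℂ → ℂ) (z : ℂ)
    (hf : DifferentiableOn ℂ f (ball 0 1))
    (hinj : Set.InjOn f (ball 0 1)) (hf0 : f 0 = z) :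
    ‖deriv f 0‖ / 4 ≤ infDist z (frontier (f '' ball 0 1)) ∧
      infDist z (frontier (f '' ball 0 1)) ≤ ‖deriv f 0‖ := by
  subst hf0
  have hopen := isOpen_image_of_injOn isOpen_ball hf hinj
  have hmem : f 0 ∈ f '' ball 0 1 := mem_image_of_mem f (mem_ball_self one_pos)
  constructor
  · have hne : (frontier (f '' ball 0 1)).Nonempty := by
      rw [nonempty_frontier_iff]
      refine ⟨⟨_, hmem⟩, fun h ↦ ?_⟩
      have := le_norm_deriv_of_ball_subset_image (d := ‖deriv f 0‖ + 1) (by positivity) hf hinj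
        (h ▸ subset_univ _)
      linarith
    rw [le_infDist hne]
    intro w hw
    rw [hopen.frontier_eq] at hw
    linarith [norm_deriv_le_four_mul_dist hf hinj hw.2]
  · rcases infDist_nonneg.eq_or_lt' (a := infDist (f 0) (frontier (f '' ball 0 1))) with h | h
    · rw [h]
      exact norm_nonneg _
    · refine le_norm_deriv_of_ball_subset_image h hf hinj ?_
      have hdisj := Set.disjoint_left.1
        (disjoint_ball_infDist (x := f 0) (s := frontier (f '' ball 0 1)))
      refine (convex_ball (f 0) _).isPreconnected.subset_left_of_subset_union hopen
        isClosed_closure.isOpen_compl (disjoint_compl_right.mono_left subset_closure)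
        (fun y hy ↦ ?_) ⟨f 0, mem_ball_self h, hmem⟩
      have := hdisj hy
      rw [hopen.frontier_eq] at this
      by_contra hn
      exact this ⟨not_not.1 fun h ↦ hn (Or.inr h), fun h ↦ hn (Or.inl h)⟩
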